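/- Let λ, b ∈ X₀([0,T₀]×D_{R₀}) with |b(t,x)| ≤ B·m(t) on [0,T₀]×D_{R₀} for a weight function m and B > 0, set φ(t) = ∫₀^t m(τ)/τ dτ, choose 0 < T < T₀ and 0 < R < R₁ < R₀ with R + B·φ(T) < R₁ and R₁ + B·φ(T) < R₀, let φ(t;t₀,x₀) denote the unique solution of dx/dt = −b(t,x)/t with x(t₀) = x₀, and set 𝒟 = ∪_{x₀∈D_{R₁}} {(t, φ(t;T,x₀)) : 0 < t ≤ T}. Then for every g ∈ X₀(𝒟) and every holomorphic ψ on D_{R₁}, the Cauchy problem t·∂w/∂t − λ(t,x)·w − b(t,x)·∂w/∂x = g(t,x), w(T,x) = ψ(x), has a unique solution w ∈ X₁(𝒟), given by w(t,x) = ψ(φ(T;t,x))·exp[−∫_t^T λ(s,φ(s;t,x))/s ds] − ∫_t^T exp[−∫_t^τ λ(s,φ(s;t,x))/s ds]·g(τ,φ(τ;t,x))/τ dτ. -/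

import Mathlib

open Set Filter MeasureTheory Metric Topology Complex

noncomputable section

/-- A *weight function* on `(0, T₀]`: increasing, continuous and positive on `(0,T₀]`,
with `∫₀^{T₀} m(τ)/τ dτ < ∞`. -/
def IsWeight (T₀ : ℝ) (m : ℝ → ℝ) : Prop :=
  MonotoneOn m (Set.Ioc 0 T₀) ∧ ContinuousOn m (Set.Ioc 0 T₀) ∧
    (∀ t ∈ Set.Ioc (0 : ℝ) T₀, 0 < m t) ∧
    MeasureTheory.IntegrableOn (fun τ => m τ / τ) (Set.Ioc 0 T₀)

/-- `φ(t) = ∫₀ᵗ m(τ)/τ dτ`. -/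
def wphi (m : ℝ → ℝ) (t : ℝ) : ℝ := ∫ τ in Set.Ioc (0 : ℝ) t, m τ / τ

/-- `f ∈ X₀(S × D_R)` : continuous on `S × D_R`, holomorphic in `x` for each fixed `t`. -/
def MemX0 (S : Set ℝ) (R : ℝ) (f : ℝ → ℂ → ℂ) : Prop :=
  ContinuousOn (fun p : ℝ × ℂ => f p.1 p.2) (S ×ˢ Metric.ball (0 : ℂ) R) ∧
    ∀ t ∈ S, DifferentiableOn ℂ (f t) (Metric.ball (0 : ℂ) R)

/-- `f ∈ X₁(S × D_R)` : `f ∈ X₀`, with a `t`-derivative for `t > 0` such that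
`t ∂f/∂t ∈ X₀`. -/
def MemX1 (S : Set ℝ) (R : ℝ) (f : ℝ → ℂ → ℂ) : Prop :=
  MemX0 S R f ∧
    ∃ g : ℝ → ℂ → ℂ, MemX0 S R g ∧
      ∀ t ∈ S, 0 < t → ∀ x ∈ Metric.ball (0 : ℂ) R,
        HasDerivWithinAt (fun s => f s x) (g t x / (t : ℂ)) S t

/-- `u` solves equation (E) :
`t ∂u/∂t = a + λ u + b ∂u/∂x + Σ_{j+α≥2} a_{j,α} u^j (∂u/∂x)^α` on `(0,T] × D_R`. -/
def SolvesE (T R : ℝ) (a lam b : ℝ → ℂ → ℂ) (c : ℕ → ℕ → ℝ → ℂ → ℂ)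
    (u : ℝ → ℂ → ℂ) : Prop :=
  ∀ t ∈ Set.Ioc (0 : ℝ) T, ∀ x ∈ Metric.ball (0 : ℂ) R,
    HasDerivWithinAt (fun s => u s x)
      ((a t x + lam t x * u t x + b t x * deriv (u t) x +
          ∑' p : ℕ × ℕ, c p.1 p.2 t x * u t x ^ p.1 * deriv (u t) x ^ p.2) / (t : ℂ))
      (Set.Ioc 0 T) t

/-- `u` is a germ (near the origin) solution of equation (E). -/
def GermSol (T₀ R₀ : ℝ) (a lam b : ℝ → ℂ → ℂ) (c : ℕ → ℕ → ℝ → ℂ → ℂ)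
    (u : ℝ → ℂ → ℂ) : Prop :=
  ∃ T, 0 < T ∧ T ≤ T₀ ∧ ∃ R, 0 < R ∧ R ≤ R₀ ∧ SolvesE T R a lam b c u

/-- the germ class `X₁^d`. -/
def MemX1d (d : ℝ) (u : ℝ → ℂ → ℂ) : Prop :=
  ∃ T > (0 : ℝ), ∃ R > (0 : ℝ), MemX1 (Set.Icc 0 T) R u ∧
    ∃ C > (0 : ℝ), ∀ t ∈ Set.Icc (0 : ℝ) T, ∀ x ∈ Metric.ball (0 : ℂ) R,
      max ‖u t x‖ ‖deriv (u t) x‖ ≤ C * t ^ d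

/-- the germ class `X₁⁺ = ⋃_{d>0} X₁^d`. -/
def MemX1plus (u : ℝ → ℂ → ℂ) : Prop := ∃ d > (0 : ℝ), MemX1d d u

/-- the germ class `X₁^{(μ)} = ⋂_{0<a<μ} X₁^a`. -/
def MemX1lt (μ : ℝ) (u : ℝ → ℂ → ℂ) : Prop := ∀ a : ℝ, 0 < a → a < μ → MemX1d a u

/-- two functions agree as germs on some `(0,ε] × D_δ`. -/
def GermEqPos (u v : ℝ → ℂ → ℂ) : Prop :=
  ∃ ε > (0 : ℝ), ∃ δ > (0 : ℝ), ∀ t ∈ Set.Ioc (0 : ℝ) ε, ∀ x ∈ Metric.ball (0 : ℂ) δ,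
    u t x = v t x

/-- the class `𝒳₁` (built on `X₁([0,T]×D_R)`) : the limsup-condition
`limsup_{ρ→0⁺} [ lim_{σ→0⁺} (1/ρ²) sup_{(0,σ)×D_ρ} |u| ] = 0`. -/
def MemXscrIcc (u : ℝ → ℂ → ℂ) : Prop :=
  (∃ T > (0 : ℝ), ∃ R > (0 : ℝ), MemX1 (Set.Icc 0 T) R u) ∧
    ∀ ε > (0 : ℝ), ∃ ρ₁ > (0 : ℝ), ∀ ρ, 0 < ρ → ρ < ρ₁ →
      ∃ σ > (0 : ℝ), ∀ t, 0 < t → t < σ → ∀ x ∈ Metric.ball (0 : ℂ) ρ,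
        ‖u t x‖ ≤ ε * ρ ^ 2

/-- the class `𝒳₁` (built on `X₁((0,T]×D_R)`). -/
def MemXscrIoc (u : ℝ → ℂ → ℂ) : Prop :=
  (∃ T > (0 : ℝ), ∃ R > (0 : ℝ), MemX1 (Set.Ioc 0 T) R u) ∧
    ∀ ε > (0 : ℝ), ∃ ρ₁ > (0 : ℝ), ∀ ρ, 0 < ρ → ρ < ρ₁ →
      ∃ σ > (0 : ℝ), ∀ t, 0 < t → t < σ → ∀ x ∈ Metric.ball (0 : ℂ) ρ,
        ‖u t x‖ ≤ ε * ρ ^ 2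

/-- `ψ` is holomorphic in a neighborhood of `x = 0`. -/
def HoloGerm (ψ : ℂ → ℂ) : Prop :=
  ∃ r > (0 : ℝ), DifferentiableOn ℂ ψ (Metric.ball (0 : ℂ) r)

/-- `t^{-λ(0,x)} w(t,x) → ψ(x)` as `t → 0⁺`, uniformly near `x = 0`,
where `t^{-λ(0,x)} = exp(-λ(0,x) log t)`. -/
def BndLimit (lam0 : ℂ → ℂ) (w : ℝ → ℂ → ℂ) (ψ : ℂ → ℂ) : Prop :=
  ∃ δ > (0 : ℝ), TendstoUniformlyOn
    (fun t x => Complex.exp (-(lam0 x) * (Real.log t : ℂ)) * w t x) ψ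
    (nhdsWithin 0 (Set.Ioi 0)) (Metric.ball (0 : ℂ) δ)

/-- `lim_{t→0⁺} sup_{x ∈ D_R} |t^{-d} u(t,x)| = 0`. -/
def SmalloOnBall (d R : ℝ) (u : ℝ → ℂ → ℂ) : Prop :=
  ∀ ε > (0 : ℝ), ∃ τ > (0 : ℝ), ∀ t, 0 < t → t < τ → ∀ x ∈ Metric.ball (0 : ℂ) R,
    ‖u t x‖ ≤ ε * t ^ d

/-- `f ∈ X₀(W)` for a general domain `W ⊆ ℝ × ℂ`. -/
def MemX0W (W : Set (ℝ × ℂ)) (f : ℝ → ℂ → ℂ) : Prop :=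
  ContinuousOn (fun p : ℝ × ℂ => f p.1 p.2) W ∧
    ∀ t : ℝ, DifferentiableOn ℂ (f t) {y : ℂ | (t, y) ∈ W}

/-- `f ∈ X₁(W)` for a general domain `W ⊆ ℝ × ℂ`. -/
def MemX1W (W : Set (ℝ × ℂ)) (f : ℝ → ℂ → ℂ) : Prop :=
  MemX0W W f ∧
    ∃ g : ℝ → ℂ → ℂ, MemX0W W g ∧
      ∀ t x, (t, x) ∈ W → 0 < t →
        HasDerivWithinAt (fun s => f s x) (g t x / (t : ℂ)) {s : ℝ | (s, x) ∈ W} t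

/-- `w` solves `t ∂w/∂t = λ w + b ∂w/∂x + g` on the domain `W`. -/
def SolvesLW (W : Set (ℝ × ℂ)) (lam b g w : ℝ → ℂ → ℂ) : Prop :=
  ∀ t x, (t, x) ∈ W → 0 < t →
    HasDerivWithinAt (fun s => w s x)
      ((lam t x * w t x + b t x * deriv (w t) x + g t x) / (t : ℂ))
      {s : ℝ | (s, x) ∈ W} t

/-- `v` solves the homogeneous linear equation `t ∂v/∂t = λ v + b ∂v/∂x`
on the product domain `S × D_R`. -/
def SolvesLin (S : Set ℝ) (R : ℝ) (lam b : ℝ → ℂ → ℂ) (v : ℝ → ℂ → ℂ) : Prop :=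
  ∀ t ∈ S, 0 < t → ∀ x ∈ Metric.ball (0 : ℂ) R,
    HasDerivWithinAt (fun s => v s x)
      ((lam t x * v t x + b t x * deriv (v t) x) / (t : ℂ)) S t

/-- the characteristic domain `𝒟 = ⋃_{x₀ ∈ D_{R₁}} {(t, φ(t;T,x₀)) : 0 < t ≤ T}`. -/
def Dchar (T R₁ : ℝ) (Φ : ℝ → ℝ → ℂ → ℂ) : Set (ℝ × ℂ) :=
  {p : ℝ × ℂ | p.1 ∈ Set.Ioc (0 : ℝ) T ∧ ∃ x₀ ∈ Metric.ball (0 : ℂ) R₁, p.2 = Φ p.1 T x₀}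

/-- the domain `W = {(t,x) ∈ [0,T] × D_R : φ(t)/r + |x| < R}`. -/
def Wset (m : ℝ → ℝ) (T R r : ℝ) : Set (ℝ × ℂ) :=
  {p : ℝ × ℂ | p.1 ∈ Set.Icc (0 : ℝ) T ∧ p.2 ∈ Metric.ball (0 : ℂ) R ∧
    wphi m p.1 / r + ‖p.2‖ < R}

/-!
The equation is solved by the method of characteristics. Over a compact time interval, a
characteristic has a compact tube around it on which the field `-b / t` is uniformly Lipschitz, so
nearby characteristics stay close. Hence the flow `F t x` of `-b / t` is injective and jointly
continuous, and its difference quotients in `x` solve a scalar linear equation; in the limit the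
derivative in `x` is `exp (-∫ s in t..T, ∂ₓβ s (F s x))` with `β = -b / t`, which never vanishes.
By a quantitative open mapping theorem, uniform in `t`, the inverse of the flow is again in `X₀`.
Along each characteristic the transport equation is a scalar linear ordinary differential equation,
so Duhamel's formula, pulled back by the inverse flow, gives the solution and its uniqueness.
-/

section Intervals

variable {I : Set ℝ} {t T : ℝ}

lemma exists_Icc_mem_nhdsWithin (ht : t ∈ I) (hT : T ∈ I) :
    ∃ a ∈ I, ∃ b ∈ I, T ∈ Icc a b ∧ Icc a b ∈ 𝓝[I] t := by
  obtain ⟨a, ha, hat⟩ : ∃ a ∈ I, Ici a ∈ 𝓝[I] t := by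
    by_cases h : ∃ a ∈ I, a < t
    · obtain ⟨a, ha, hat⟩ := h
      exact ⟨a, ha, mem_nhdsWithin_of_mem_nhds (Ici_mem_nhds hat)⟩
    · push Not at h
      exact ⟨t, ht, mem_of_superset self_mem_nhdsWithin h⟩
  obtain ⟨b, hb, hbt⟩ : ∃ b ∈ I, Iic b ∈ 𝓝[I] t := by
    by_cases h : ∃ b ∈ I, t < b
    · obtain ⟨b, hb, htb⟩ := h
      exact ⟨b, hb, mem_nhdsWithin_of_mem_nhds (Iic_mem_nhds htb)⟩
    · push Not at h
      exact ⟨t, ht, mem_of_superset self_mem_nhdsWithin h⟩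
  exact ⟨min a T, min_rec' (· ∈ I) ha hT, max b T, max_rec' (· ∈ I) hb hT,
    ⟨min_le_right a T, le_max_right b T⟩,
    inter_mem (mem_of_superset hat (Ici_subset_Ici.2 (min_le_left a T)))
      (mem_of_superset hbt (Iic_subset_Iic.2 (le_max_left b T)))⟩

lemma continuousOn_prod_of_dist_le {X Y : Type*} [PseudoMetricSpace X] [PseudoMetricSpace Y]
    {V : Set X} {f : ℝ → X → Y} (hT : T ∈ I)
    (hf : ∀ x ∈ V, ContinuousOn (fun t => f t x) I)
    (hdist : ∀ x ∈ V, ∀ a ∈ I, ∀ b ∈ I, T ∈ Icc a b →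
      ∃ C : ℝ, ∀ᶠ y in 𝓝 x, ∀ t ∈ Icc a b, dist (f t y) (f t x) ≤ C * dist y x) :
    ContinuousOn (fun p : ℝ × X => f p.1 p.2) (I ×ˢ V) := by
  rintro ⟨t, x⟩ ⟨ht, hx⟩
  obtain ⟨a, ha, b, hb, hTab, hab⟩ := exists_Icc_mem_nhdsWithin ht hT
  obtain ⟨C, hC⟩ := hdist x hx a ha b hb hTab
  suffices Tendsto (fun p : ℝ × X => f p.1 p.2) (𝓝[I] t ×ˢ 𝓝 x) (𝓝 (f t x)) by
    refine this.mono_left ?_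
    rw [nhdsWithin_prod_eq]
    exact Filter.prod_mono_right _ nhdsWithin_le_nhds
  have hline : Tendsto (fun p : ℝ × X => f p.1 x) (𝓝[I] t ×ˢ 𝓝 x) (𝓝 (f t x)) :=
    (hf x hx t ht).tendsto.comp tendsto_fst
  have hsmall : Tendsto (fun p : ℝ × X => C * dist p.2 x) (𝓝[I] t ×ˢ 𝓝 x) (𝓝 0) := by
    have : Tendsto (fun y => C * dist y x) (𝓝 x) (𝓝 (C * dist x x)) :=
      Continuous.tendsto (by fun_prop) x
    rw [dist_self, mul_zero] at this
    exact this.comp tendsto_snd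
  refine tendsto_of_tendsto_of_dist hline
    (squeeze_zero' (.of_forall fun _ => dist_nonneg) ?_ hsmall)
  filter_upwards [prod_mem_prod hab hC] with p hp
  rw [dist_comm]
  exact hp.2 p.1 hp.1

variable [OrdConnected I] {E : Type*} [NormedAddCommGroup E] {f : ℝ → E}

lemma intervalIntegrable_of_continuousOn (hf : ContinuousOn f I) (ht : t ∈ I) (hT : T ∈ I) :
    IntervalIntegrable f volume t T :=
  (hf.mono (OrdConnected.uIcc_subset ‹_› ht hT)).intervalIntegrable

lemma hasDerivWithinAt_integral_left [NormedSpace ℝ E] [CompleteSpace E] (hf : ContinuousOn f I)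
    (ht : t ∈ I) (hT : T ∈ I) : HasDerivWithinAt (fun u => ∫ s in u..T, f s) (-f t) I t := by
  obtain ⟨a, ha, b, hb, -, hab⟩ := exists_Icc_mem_nhdsWithin ht hT
  have : Fact (t ∈ Icc a b) := ⟨mem_of_mem_nhdsWithin ht hab⟩
  have hfab : ContinuousOn f (Icc a b) := hf.mono (OrdConnected.out ‹_› ha hb)
  exact (intervalIntegral.integral_hasDerivWithinAt_left
    (intervalIntegrable_of_continuousOn hf ht hT)
    (hfab.stronglyMeasurableAtFilter_nhdsWithin measurableSet_Icc t)
    (hfab t this.out)).mono_of_mem_nhdsWithin hab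

end Intervals

/-- `D` is relatively open in `I × ℂ`, expressed through neighbourhood filters so that limits in
`t ∈ I` and in `x` can be taken independently. -/
structure IsRelOpen (I : Set ℝ) (D : Set (ℝ × ℂ)) : Prop where
  fst_mem : ∀ p ∈ D, p.1 ∈ I
  mem_nhds : ∀ p ∈ D, D ∈ 𝓝[I] p.1 ×ˢ 𝓝 p.2

namespace IsRelOpen

variable {I : Set ℝ} {D : Set (ℝ × ℂ)} {t : ℝ} {x : ℂ}

protected lemma prod {U : Set ℂ} (hU : IsOpen U) : IsRelOpen I (I ×ˢ U) where
  fst_mem _ hp := hp.1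
  mem_nhds _ hp := prod_mem_prod self_mem_nhdsWithin (hU.mem_nhds hp.2)

lemma nhdsWithin_eq (hD : IsRelOpen I D) (hp : (t, x) ∈ D) : 𝓝[D] (t, x) = 𝓝[I] t ×ˢ 𝓝 x := by
  rw [← nhdsWithin_univ x, ← nhdsWithin_prod_eq]
  refine le_antisymm (nhdsWithin_mono _ fun p hp => ⟨hD.fst_mem p hp, mem_univ _⟩) ?_
  rw [nhdsWithin_le_iff, nhdsWithin_prod_eq, nhdsWithin_univ]
  exact hD.mem_nhds _ hp

lemma isOpen_slice (hD : IsRelOpen I D) (t : ℝ) : IsOpen {x : ℂ | (t, x) ∈ D} := by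
  refine isOpen_iff_mem_nhds.2 fun x hx => ?_
  obtain ⟨A, hA, B, hB, hAB⟩ := mem_prod_iff.1 (hD.mem_nhds _ hx)
  exact mem_of_superset hB fun y hy => hAB ⟨mem_of_mem_nhdsWithin (hD.fst_mem (t, x) hx) hA, hy⟩

lemma timeSlice_mem_nhdsWithin (hD : IsRelOpen I D) (hp : (t, x) ∈ D) :
    {s : ℝ | (s, x) ∈ D} ∈ 𝓝[I] t := by
  obtain ⟨A, hA, B, hB, hAB⟩ := mem_prod_iff.1 (hD.mem_nhds _ hp)
  exact mem_of_superset hA fun s hs => hAB ⟨hs, mem_of_mem_nhds hB⟩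

lemma nhdsWithin_timeSlice (hD : IsRelOpen I D) (hp : (t, x) ∈ D) :
    𝓝[{s : ℝ | (s, x) ∈ D}] t = 𝓝[I] t :=
  le_antisymm (nhdsWithin_mono _ fun _ hs => hD.fst_mem _ hs)
    (nhdsWithin_le_iff.2 (hD.timeSlice_mem_nhdsWithin hp))

end IsRelOpen

namespace MemX0W

variable {I : Set ℝ} {D : Set (ℝ × ℂ)} {f g φ : ℝ → ℂ → ℂ} {t : ℝ} {x : ℂ}

protected lemma mono {D' : Set (ℝ × ℂ)} (hf : MemX0W D f) (h : D' ⊆ D) : MemX0W D' f :=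
  ⟨hf.1.mono h, fun t => (hf.2 t).mono fun _ hx => h hx⟩

protected lemma congr (hf : MemX0W D f) (h : ∀ p ∈ D, g p.1 p.2 = f p.1 p.2) : MemX0W D g :=
  ⟨hf.1.congr h, fun t => (hf.2 t).congr fun x hx => h (t, x) hx⟩

lemma of_memX0 {S : Set ℝ} {R : ℝ} (hf : MemX0 S R f) : MemX0W (S ×ˢ ball 0 R) f :=
  ⟨hf.1, fun t x hx => (hf.2 t hx.1).mono (fun _ hy => hy.2) x hx⟩

lemma of_differentiableOn {ψ : ℂ → ℂ} {V : Set ℂ} (hψ : DifferentiableOn ℂ ψ V) :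
    MemX0W (I ×ˢ V) fun _ => ψ :=
  ⟨hψ.continuousOn.comp continuousOn_snd fun _ hp => hp.2, fun _ => hψ.mono fun _ hx => hx.2⟩

protected lemma comp {D' : Set (ℝ × ℂ)} (hf : MemX0W D f) (hφ : MemX0W D' φ)
    (h : ∀ p ∈ D', (p.1, φ p.1 p.2) ∈ D) : MemX0W D' fun t x => f t (φ t x) :=
  ⟨hf.1.comp (f := fun p : ℝ × ℂ => (p.1, φ p.1 p.2)) (continuousOn_fst.prodMk hφ.1) h,
    fun t => (hf.2 t).comp (hφ.2 t) fun x hx => h (t, x) hx⟩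

protected lemma neg (hf : MemX0W D f) : MemX0W D fun t x => -f t x :=
  ⟨hf.1.neg, fun t => (hf.2 t).neg⟩

protected lemma add (hf : MemX0W D f) (hg : MemX0W D g) : MemX0W D fun t x => f t x + g t x :=
  ⟨hf.1.add hg.1, fun t => (hf.2 t).add (hg.2 t)⟩

protected lemma sub (hf : MemX0W D f) (hg : MemX0W D g) : MemX0W D fun t x => f t x - g t x :=
  ⟨hf.1.sub hg.1, fun t => (hf.2 t).sub (hg.2 t)⟩

protected lemma mul (hf : MemX0W D f) (hg : MemX0W D g) : MemX0W D fun t x => f t x * g t x :=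
  ⟨hf.1.mul hg.1, fun t => (hf.2 t).mul (hg.2 t)⟩

protected lemma exp (hf : MemX0W D f) : MemX0W D fun t x => Complex.exp (f t x) :=
  ⟨hf.1.cexp, fun t => (hf.2 t).cexp⟩

lemma div_time (hf : MemX0W D f) (hD : ∀ p ∈ D, p.1 ≠ 0) :
    MemX0W D fun t x => f t x / (t : ℂ) :=
  ⟨hf.1.div (by fun_prop) fun p hp => ofReal_ne_zero.2 (hD p hp), fun t => (hf.2 t).div_const _⟩

lemma continuousOn_comp_curve {c : ℝ → ℂ} (hf : MemX0W D f) (hc : ContinuousOn c I)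
    (h : ∀ s ∈ I, (s, c s) ∈ D) : ContinuousOn (fun s => f s (c s)) I :=
  hf.1.comp (f := fun s => (s, c s)) (continuousOn_id.prodMk hc) h

protected lemma tendsto (hD : IsRelOpen I D) (hf : MemX0W D f) (hp : (t, x) ∈ D) :
    Tendsto (fun q : ℝ × ℂ => f q.1 q.2) (𝓝[I] t ×ˢ 𝓝 x) (𝓝 (f t x)) :=
  (hf.1 _ hp).mono_left (hD.nhdsWithin_eq hp).ge

lemma differentiableAt (hD : IsRelOpen I D) (hf : MemX0W D f) (hp : (t, x) ∈ D) :
    DifferentiableAt ℂ (f t) x :=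
  (hf.2 t).differentiableAt ((hD.isOpen_slice t).mem_nhds hp)

lemma tendsto_deriv (hD : IsRelOpen I D) (hf : MemX0W D f) (hp : (t, x) ∈ D) :
    Tendsto (fun q : ℝ × ℂ => deriv (f q.1) q.2) (𝓝[I] t ×ˢ 𝓝 x) (𝓝 (deriv (f t) x)) := by
  obtain ⟨A, hA, B, hB, hAB⟩ := mem_prod_iff.1 (hD.mem_nhds _ hp)
  obtain ⟨r, hr, hrB⟩ := Metric.mem_nhds_iff.1 hB
  have htA : t ∈ A := mem_of_mem_nhdsWithin (hD.fst_mem _ hp) hA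
  have hball : ∀ s ∈ A, DifferentiableOn ℂ (f s) (ball x r) := fun s hs =>
    (hf.2 s).mono fun y hy => hAB ⟨hs, hrB hy⟩
  have tendsto_fixed {h : ℂ → ℂ} (hh : DifferentiableOn ℂ h (ball x r)) {y : ℂ}
      (hy : y ∈ ball x r) : Tendsto (fun q : ℝ × ℂ => h q.2) (𝓝[I] t ×ˢ 𝓝 y) (𝓝 (h y)) :=
    (hh.continuousOn.continuousAt (isOpen_ball.mem_nhds hy)).tendsto.comp tendsto_snd
  have hunif : TendstoLocallyUniformlyOn f (f t) (𝓝[I] t) (ball x r) := by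
    rw [isOpen_ball.tendstoLocallyUniformlyOn_iff_forall_tendsto]
    intro y hy
    exact ((tendsto_fixed (hball t htA) hy).prodMk_nhds
      (hf.tendsto hD (hAB ⟨htA, hrB hy⟩))).mono_right (nhds_le_uniformity _)
  have hderiv := hunif.deriv (eventually_of_mem hA hball) isOpen_ball
  rw [isOpen_ball.tendstoLocallyUniformlyOn_iff_forall_tendsto] at hderiv
  exact (tendsto_fixed ((hball t htA).deriv isOpen_ball) (mem_ball_self hr)).congr_uniformity
    (hderiv x (mem_ball_self hr))

protected lemma deriv (hD : IsRelOpen I D) (hf : MemX0W D f) : MemX0W D fun t => deriv (f t) :=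
  ⟨fun _ hp => (hf.tendsto_deriv hD hp).mono_left (hD.nhdsWithin_eq hp).le,
    fun t => (hf.2 t).deriv (hD.isOpen_slice t)⟩

lemma isLittleO_sub_sub (hD : IsRelOpen I D) (hf : MemX0W D f) (hp : (t, x) ∈ D) :
    (fun q : ℝ × ℂ => f q.1 q.2 - f q.1 x - deriv (f t) x * (q.2 - x))
      =o[𝓝[I] t ×ˢ 𝓝 x] fun q => q.2 - x := by
  rw [Asymptotics.isLittleO_iff]
  intro ε hε
  have hnear := ((hf.tendsto_deriv hD hp).eventually (ball_mem_nhds _ hε)).and (hD.mem_nhds _ hp)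
  obtain ⟨A, hA, B, hB, hAB⟩ := mem_prod_iff.1 hnear
  obtain ⟨δ, hδ, hδB⟩ := Metric.mem_nhds_iff.1 hB
  filter_upwards [prod_mem_prod hA (ball_mem_nhds x hδ)] with q hq
  have hder : ∀ y ∈ ball x δ, HasDerivWithinAt (fun y => f q.1 y - deriv (f t) x * y)
      (deriv (f q.1) y - deriv (f t) x) (ball x δ) y := fun y hy => by
    simpa using ((hf.differentiableAt hD (hAB (mk_mem_prod hq.1 (hδB hy))).2).hasDerivAt.fun_sub
      ((hasDerivAt_id' y).const_mul (deriv (f t) x))).hasDerivWithinAt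
  have := Convex.norm_image_sub_le_of_norm_hasDerivWithin_le hder
    (fun y hy => (mem_ball_iff_norm.1 (hAB (mk_mem_prod hq.1 (hδB hy))).1).le) (convex_ball x δ)
    (mem_ball_self hδ) hq.2
  rwa [sub_sub_sub_comm, ← mul_sub] at this

lemma hasDerivWithinAt_comp_curve_iff (hD : IsRelOpen I D) (hf : MemX0W D f) {c : ℝ → ℂ}
    {c' d : ℂ} (hp : (t, c t) ∈ D) (hc : HasDerivWithinAt c c' I t) :
    HasDerivWithinAt (fun s => f s (c s)) (d + deriv (f t) (c t) * c') I t ↔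
      HasDerivWithinAt (fun s => f s (c t)) d I t := by
  have hdiff : HasDerivWithinAt (fun s => f s (c s) - f s (c t))
      (deriv (f t) (c t) * c') I t := by
    have hcurve : Tendsto (fun s => (s, c s)) (𝓝[I] t) (𝓝[I] t ×ˢ 𝓝 (c t)) :=
      tendsto_id.prodMk hc.continuousWithinAt
    have hO : (fun s => c s - c t) =O[𝓝[I] t] fun s => s - t := by
      have := hc.isBigO_sub
      rwa [Filter.prod_pure, Asymptotics.isBigO_map] at this
    have ho := ((hf.isLittleO_sub_sub hD hp).comp_tendsto hcurve).trans_isBigO hO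
    have hlin := (hc.const_mul (deriv (f t) (c t)))
    rw [hasDerivWithinAt_iff_isLittleO] at hlin ⊢
    refine (ho.add hlin).congr_left fun s => ?_
    simp only [Function.comp_apply]
    ring
  constructor <;> intro h
  · simpa using h.fun_sub hdiff
  · simpa using h.fun_add hdiff

end MemX0W

namespace MemX0W

variable {I : Set ℝ} {V : Set ℂ} {f : ℝ → ℂ → ℂ} {T : ℝ}

lemma exists_lipschitzOnWith_tube (hV : IsOpen V) (hf : MemX0W (I ×ˢ V) f) {J : Set ℝ}
    (hJ : IsCompact J) (hJI : J ⊆ I) {c : ℝ → ℂ} (hc : ContinuousOn c J) (hcV : MapsTo c J V) :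
    ∃ ρ > 0, ∃ L : NNReal, ∀ s ∈ J, closedBall (c s) ρ ⊆ V ∧
      LipschitzOnWith L (f s) (closedBall (c s) ρ) := by
  have hK : IsCompact (c '' J) := hJ.image_of_continuousOn hc
  obtain ⟨ρ, hρ, hρV⟩ := hK.exists_cthickening_subset_open hV hcV.image_subset
  obtain ⟨C, hC⟩ := (hJ.prod hK.cthickening).exists_bound_of_continuousOn
    ((hf.deriv (.prod hV)).1.mono (prod_mono hJI hρV))
  refine ⟨ρ, hρ, C.toNNReal, fun s hs => ?_⟩
  have hball : closedBall (c s) ρ ⊆ cthickening ρ (c '' J) :=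
    closedBall_subset_cthickening (mem_image_of_mem c hs) ρ
  refine ⟨hball.trans hρV, (convex_closedBall _ _).lipschitzOnWith_of_nnnorm_deriv_le
    (fun y hy => hf.differentiableAt (.prod hV) ⟨hJI hs, hρV (hball hy)⟩) fun y hy => ?_⟩
  exact NNReal.le_toNNReal_of_coe_le (hC (s, y) ⟨hs, hball hy⟩)

lemma continuousOn_time (hf : MemX0W (I ×ˢ V) f) {x : ℂ} (hx : x ∈ V) :
    ContinuousOn (fun s => f s x) I :=
  hf.continuousOn_comp_curve continuousOn_const fun _ hs => ⟨hs, hx⟩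

variable [OrdConnected I]

lemma differentiableOn_integral (hV : IsOpen V) (hf : MemX0W (I ×ˢ V) f) {t : ℝ} (ht : t ∈ I)
    (hT : T ∈ I) : DifferentiableOn ℂ (fun x => ∫ s in t..T, f s x) V := by
  intro x hx
  have hsub : uIcc t T ⊆ I := OrdConnected.uIcc_subset ‹_› ht hT
  have meas {h : ℝ → ℂ} (hh : ContinuousOn h I) :
      AEStronglyMeasurable h (volume.restrict (uIoc t T)) :=
    (hh.mono (uIoc_subset_uIcc.trans hsub)).aestronglyMeasurable measurableSet_uIoc
  obtain ⟨ρ, hρ, L, hL⟩ := hf.exists_lipschitzOnWith_tube hV isCompact_uIcc hsub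
    continuousOn_const fun _ _ => hx
  have hball : closedBall x ρ ⊆ V := (hL t left_mem_uIcc).1
  refine (intervalIntegral.hasDerivAt_integral_of_dominated_loc_of_lip (bound := fun _ => L)
    (closedBall_mem_nhds x hρ) ?_ (intervalIntegrable_of_continuousOn (hf.continuousOn_time hx)
      ht hT) (meas ((hf.deriv (.prod hV)).continuousOn_time hx)) ?_ (by simp)
    ?_).2.differentiableAt.differentiableWithinAt
  · filter_upwards [closedBall_mem_nhds x hρ] with y hy
    exact meas (hf.continuousOn_time (hball hy))
  · refine .of_forall fun s hs => ?_
    simpa using (hL s (uIoc_subset_uIcc hs)).2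
  · refine .of_forall fun s hs => ?_
    exact (hf.differentiableAt (.prod hV) ⟨hsub (uIoc_subset_uIcc hs), hx⟩).hasDerivAt

lemma integral (hV : IsOpen V) (hT : T ∈ I) (hf : MemX0W (I ×ˢ V) f) :
    MemX0W (I ×ˢ V) fun t x => ∫ s in t..T, f s x := by
  refine ⟨continuousOn_prod_of_dist_le (f := fun t x => ∫ s in t..T, f s x) hT
    (fun x hx t ht => ?_) fun x hx a ha b hb hTab => ?_,
    fun t x hx => (hf.differentiableOn_integral hV hx.1 hT x hx.2).mono fun _ hy => hy.2⟩
  · exact (hasDerivWithinAt_integral_left (hf.continuousOn_time hx) ht hT).continuousWithinAt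
  have hab : Icc a b ⊆ I := OrdConnected.out ‹_› ha hb
  obtain ⟨ρ, hρ, L, hL⟩ := hf.exists_lipschitzOnWith_tube hV isCompact_Icc hab
    continuousOn_const fun _ _ => hx
  refine ⟨L * (b - a), ?_⟩
  filter_upwards [closedBall_mem_nhds x hρ] with y hy t ht
  have hyV : y ∈ V := (hL T hTab).1 hy
  rw [dist_eq_norm, ← intervalIntegral.integral_sub
    (intervalIntegrable_of_continuousOn (hf.continuousOn_time hyV) (hab ht) hT)
    (intervalIntegrable_of_continuousOn (hf.continuousOn_time hx) (hab ht) hT)]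
  calc ‖∫ s in t..T, (f s y - f s x)‖ ≤ L * dist y x * |T - t| := by
        refine intervalIntegral.norm_integral_le_of_norm_le_const fun s hs => ?_
        rw [← dist_eq_norm]
        exact (hL s (uIcc_subset_Icc ht hTab (uIoc_subset_uIcc hs))).2.dist_le_mul y hy x
          (mem_closedBall_self hρ.le)
    _ ≤ L * dist y x * (b - a) := by
        gcongr
        exact abs_sub_le_of_le_of_le hTab.1 hTab.2 ht.1 ht.2
    _ = L * (b - a) * dist y x := by ring

end MemX0W

section TubeStability

variable {E : Type*} [NormedAddCommGroup E] [NormedSpace ℝ E] {v : ℝ → E → E} {c₁ c₂ : ℝ → E}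
  {L : NNReal} {a b τ s ρ : ℝ}

lemma norm_sub_le_of_lipschitzOnWith_tube_of_le
    (hv : ∀ s ∈ Icc a b, LipschitzOnWith L (v s) (closedBall (c₁ s) ρ))
    (h₁ : ∀ s ∈ Icc a b, HasDerivWithinAt c₁ (v s (c₁ s)) (Icc a b) s)
    (h₂ : ∀ s ∈ Icc a b, HasDerivWithinAt c₂ (v s (c₂ s)) (Icc a b) s)
    (hρ : ‖c₂ a - c₁ a‖ * Real.exp ((L + 1) * (b - a)) < ρ) (hs : s ∈ Icc a b) :
    ‖c₂ s - c₁ s‖ ≤ ‖c₂ a - c₁ a‖ * Real.exp ((L + 1) * (b - a)) := by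
  -- The barrier `δ * exp ((L + 1) * (r - a))` starts strictly above `‖c₂ a - c₁ a‖` and has rate
  -- `L + 1 > L`, so the difference can never catch up with it; then let `δ → ‖c₂ a - c₁ a‖`.
  have hlim : Tendsto (fun δ : ℝ => δ * Real.exp ((L + 1) * (b - a))) (𝓝[>] ‖c₂ a - c₁ a‖)
      (𝓝 (‖c₂ a - c₁ a‖ * Real.exp ((L + 1) * (b - a)))) :=
    Continuous.continuousWithinAt (by fun_prop)
  refine ge_of_tendsto hlim ?_
  filter_upwards [hlim.eventually (gt_mem_nhds hρ), self_mem_nhdsWithin] with δ hδρ hδ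
  have hδ₀ : 0 < δ := (norm_nonneg _).trans_lt hδ
  have hB_le : ∀ r ∈ Icc a b,
      δ * Real.exp ((L + 1) * (r - a)) ≤ δ * Real.exp ((L + 1) * (b - a)) := fun r hr => by
    gcongr
    exact hr.2
  refine (image_norm_le_of_norm_deriv_right_lt_deriv_boundary
    (f := fun r => c₂ r - c₁ r) (B := fun r => δ * Real.exp ((L + 1) * (r - a)))
    (B' := fun r => (L + 1) * (δ * Real.exp ((L + 1) * (r - a))))
    (fun r hr => ((h₂ r hr).sub (h₁ r hr)).continuousWithinAt)
    (fun r hr => (((h₂ r (Ico_subset_Icc_self hr)).fun_sub (h₁ r (Ico_subset_Icc_self hr))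
      ).mono_of_mem_nhdsWithin (Icc_mem_nhdsGE_of_mem hr)))
    (by simpa using hδ.le) (fun r => ?_) (fun r hr hrB => ?_) hs).trans (hB_le s hs)
  · exact ((((hasDerivAt_id r).sub_const a).const_mul ((L : ℝ) + 1)).exp.const_mul δ).congr_deriv
      (by simp; ring)
  · have hr' := Ico_subset_Icc_self hr
    have hρr : ‖c₂ r - c₁ r‖ ≤ ρ := hrB.le.trans ((hB_le r hr').trans hδρ.le)
    have hlip := (hv r hr').norm_sub_le (mem_closedBall_iff_norm.2 hρr)
      (mem_closedBall_self ((norm_nonneg _).trans hρr))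
    rw [hrB] at hlip
    refine hlip.trans_lt ?_
    gcongr
    exact lt_add_one _

/-- Backward in time this is the forward estimate for the field `s ↦ -v (-s)`. -/
lemma norm_sub_le_of_lipschitzOnWith_tube_of_ge
    (hv : ∀ s ∈ Icc a b, LipschitzOnWith L (v s) (closedBall (c₁ s) ρ))
    (h₁ : ∀ s ∈ Icc a b, HasDerivWithinAt c₁ (v s (c₁ s)) (Icc a b) s)
    (h₂ : ∀ s ∈ Icc a b, HasDerivWithinAt c₂ (v s (c₂ s)) (Icc a b) s)
    (hρ : ‖c₂ b - c₁ b‖ * Real.exp ((L + 1) * (b - a)) < ρ) (hs : s ∈ Icc a b) :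
    ‖c₂ s - c₁ s‖ ≤ ‖c₂ b - c₁ b‖ * Real.exp ((L + 1) * (b - a)) := by
  have hneg : ∀ r ∈ Icc (-b) (-a), -r ∈ Icc a b := fun r hr => ⟨le_neg.1 hr.2, neg_le.1 hr.1⟩
  have hrev : ∀ c : ℝ → E, (∀ s ∈ Icc a b, HasDerivWithinAt c (v s (c s)) (Icc a b) s) →
      ∀ r ∈ Icc (-b) (-a), HasDerivWithinAt (fun r => c (-r)) (-v (-r) (c (-r)))
        (Icc (-b) (-a)) r := fun c hc r hr => by
    simpa [Function.comp_def] using (hc (-r) (hneg r hr)).scomp r (hasDerivWithinAt_neg r _) hneg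
  have := norm_sub_le_of_lipschitzOnWith_tube_of_le (a := -b) (b := -a) (s := -s) (L := L)
    (ρ := ρ) (v := fun r x => -v (-r) x) (c₁ := fun r => c₁ (-r)) (c₂ := fun r => c₂ (-r))
    (fun r hr => (hv _ (hneg r hr)).neg) (hrev c₁ h₁) (hrev c₂ h₂)
  simp only [neg_neg, neg_sub_neg] at this
  exact this hρ ⟨neg_le_neg hs.2, neg_le_neg hs.1⟩

lemma norm_sub_le_of_lipschitzOnWith_tube
    (hv : ∀ s ∈ Icc a b, LipschitzOnWith L (v s) (closedBall (c₁ s) ρ))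
    (h₁ : ∀ s ∈ Icc a b, HasDerivWithinAt c₁ (v s (c₁ s)) (Icc a b) s)
    (h₂ : ∀ s ∈ Icc a b, HasDerivWithinAt c₂ (v s (c₂ s)) (Icc a b) s) (hτ : τ ∈ Icc a b)
    (hρ : ‖c₂ τ - c₁ τ‖ * Real.exp ((L + 1) * (b - a)) < ρ) (hs : s ∈ Icc a b) :
    ‖c₂ s - c₁ s‖ ≤ ‖c₂ τ - c₁ τ‖ * Real.exp ((L + 1) * (b - a)) := by
  have hmono : ∀ {d : ℝ}, d ≤ b - a → ‖c₂ τ - c₁ τ‖ * Real.exp ((L + 1) * d) ≤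
      ‖c₂ τ - c₁ τ‖ * Real.exp ((L + 1) * (b - a)) := fun h => by gcongr
  rcases le_total τ s with h | h
  · have hsub : Icc τ b ⊆ Icc a b := Icc_subset_Icc_left hτ.1
    have hle := hmono (sub_le_sub_left hτ.1 b)
    exact (norm_sub_le_of_lipschitzOnWith_tube_of_le (fun r hr => hv r (hsub hr))
      (fun r hr => (h₁ r (hsub hr)).mono hsub) (fun r hr => (h₂ r (hsub hr)).mono hsub)
      (hle.trans_lt hρ) ⟨h, hs.2⟩).trans hle
  · have hsub : Icc a τ ⊆ Icc a b := Icc_subset_Icc_right hτ.2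
    have hle := hmono (sub_le_sub_right hτ.2 a)
    exact (norm_sub_le_of_lipschitzOnWith_tube_of_ge (fun r hr => hv r (hsub hr))
      (fun r hr => (h₁ r (hsub hr)).mono hsub) (fun r hr => (h₂ r (hsub hr)).mono hsub)
      (hle.trans_lt hρ) ⟨hs.1, h⟩).trans hle

end TubeStability

section Duhamel

/-- Duhamel's formula for the solution at time `t` of the scalar linear equation `z' = a z + c`
with terminal value `z T = z₀`. -/
def duhamel (T : ℝ) (z₀ : ℂ) (a c : ℝ → ℂ) (t : ℝ) : ℂ :=
  z₀ * exp (-∫ s in t..T, a s) - ∫ τ in t..T, exp (-∫ s in t..τ, a s) * c τ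

variable {I : Set ℝ} [OrdConnected I] {T t : ℝ} {a c z : ℝ → ℂ} {z₀ : ℂ}

lemma duhamel_self : duhamel T z₀ a c T = z₀ := by simp [duhamel]

lemma hasDerivWithinAt_integral_exp_mul (ha : ContinuousOn a I) (hc : ContinuousOn c I)
    (ht : t ∈ I) (hT : T ∈ I) :
    HasDerivWithinAt (fun u => ∫ τ in u..T, exp (∫ s in τ..T, a s) * c τ)
      (-(exp (∫ s in t..T, a s) * c t)) I t := by
  have hexp : ContinuousOn (fun τ => exp (∫ s in τ..T, a s)) I := fun _ hτ =>
    (hasDerivWithinAt_integral_left ha hτ hT).continuousWithinAt.cexp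
  exact hasDerivWithinAt_integral_left (hexp.mul hc) ht hT

lemma duhamel_eq_exp_mul (ha : ContinuousOn a I) (ht : t ∈ I) (hT : T ∈ I) :
    duhamel T z₀ a c t =
      exp (-∫ s in t..T, a s) * (z₀ - ∫ τ in t..T, exp (∫ s in τ..T, a s) * c τ) := by
  have hsplit : ∫ τ in t..T, exp (-∫ s in t..τ, a s) * c τ =
      ∫ τ in t..T, exp (-∫ s in t..T, a s) * (exp (∫ s in τ..T, a s) * c τ) := by
    refine intervalIntegral.integral_congr fun τ hτ => ?_
    have hτI : τ ∈ I := OrdConnected.uIcc_subset ‹_› ht hT hτ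
    rw [← intervalIntegral.integral_add_adjacent_intervals (intervalIntegrable_of_continuousOn ha
      ht hτI) (intervalIntegrable_of_continuousOn ha hτI hT), ← mul_assoc, ← Complex.exp_add]
    congr 2
    ring
  rw [duhamel, hsplit, intervalIntegral.integral_const_mul]
  ring

lemma hasDerivWithinAt_duhamel (ha : ContinuousOn a I) (hc : ContinuousOn c I) (ht : t ∈ I)
    (hT : T ∈ I) :
    HasDerivWithinAt (duhamel T z₀ a c) (a t * duhamel T z₀ a c t + c t) I t := by
  refine (((hasDerivWithinAt_integral_left ha ht hT).fun_neg.cexp.fun_mul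
    ((hasDerivWithinAt_integral_exp_mul ha hc ht hT).const_sub z₀)).congr_of_mem
      (fun s hs => duhamel_eq_exp_mul ha hs hT) ht).congr_deriv ?_
  have hcancel : exp (-∫ s in t..T, a s) * exp (∫ s in t..T, a s) = 1 := by
    rw [← Complex.exp_add, neg_add_cancel, Complex.exp_zero]
  rw [duhamel_eq_exp_mul ha ht hT]
  linear_combination c t * hcancel

lemma eq_duhamel (ha : ContinuousOn a I) (hc : ContinuousOn c I) (ht : t ∈ I) (hT : T ∈ I)
    (hz : ∀ s ∈ I, HasDerivWithinAt z (a s * z s + c s) I s) :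
    z t = duhamel T (z T) a c t := by
  have hconst : ∀ s ∈ I, HasDerivWithinAt (fun s => z s * exp (∫ r in s..T, a r) +
      ∫ τ in s..T, exp (∫ r in τ..T, a r) * c τ) 0 I s := fun s hs => by
    refine (((hz s hs).fun_mul (hasDerivWithinAt_integral_left ha hs hT).cexp).fun_add
      (hasDerivWithinAt_integral_exp_mul ha hc hs hT)).congr_deriv ?_
    ring
  have heq := Convex.norm_image_sub_le_of_norm_hasDerivWithin_le (C := 0) hconst (by simp)
    (OrdConnected.convex ‹_›) hT ht
  rw [zero_mul, norm_le_zero_iff, sub_eq_zero] at heq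
  simp only [intervalIntegral.integral_same, Complex.exp_zero, mul_one, add_zero] at heq
  rw [duhamel_eq_exp_mul ha ht hT, ← heq, add_sub_cancel_right, mul_left_comm,
    ← Complex.exp_add, neg_add_cancel, Complex.exp_zero, mul_one]

lemma MemX0W.duhamel {V : Set ℂ} (hV : IsOpen V) (hT : T ∈ I) {ψ : ℂ → ℂ} {ℓ γ : ℝ → ℂ → ℂ}
    (hψ : DifferentiableOn ℂ ψ V) (hℓ : MemX0W (I ×ˢ V) ℓ) (hγ : MemX0W (I ×ˢ V) γ) :
    MemX0W (I ×ˢ V) fun t x => duhamel T (ψ x) (fun s => ℓ s x) (fun s => γ s x) t := by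
  have hΛ := hℓ.integral hV hT
  exact (hΛ.neg.exp.mul ((MemX0W.of_differentiableOn hψ).sub
    ((hΛ.exp.mul hγ).integral hV hT))).congr fun p hp =>
      duhamel_eq_exp_mul (hℓ.continuousOn_time hp.2) hp.1 hT

end Duhamel

section SweptDomain

/-- The part of `I × ℂ` covered by the curves `t ↦ F t x₀`, `x₀ ∈ V`; the characteristic domain `𝒟`
of a flow `F` is of this form. -/
def sweptDomain (I : Set ℝ) (V : Set ℂ) (F : ℝ → ℂ → ℂ) : Set (ℝ × ℂ) :=
  {p | p.1 ∈ I ∧ ∃ x₀ ∈ V, p.2 = F p.1 x₀}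

variable {I : Set ℝ} {V : Set ℂ} {F : ℝ → ℂ → ℂ} {t : ℝ} {x : ℂ}

lemma mk_mem_sweptDomain (ht : t ∈ I) (hx : x ∈ V) : (t, F t x) ∈ sweptDomain I V F :=
  ⟨ht, x, hx, rfl⟩

lemma sweptDomain_subset_prod {U : Set ℂ} (h : ∀ t ∈ I, ∀ x ∈ V, F t x ∈ U) :
    sweptDomain I V F ⊆ I ×ˢ U := by
  rintro ⟨t, y⟩ ⟨ht, x, hx, hy⟩
  obtain rfl : y = F t x := hy
  exact ⟨ht, h t ht x hx⟩

lemma invFunOn_mem_of_mem_sweptDomain (hp : (t, x) ∈ sweptDomain I V F) :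
    Function.invFunOn (F t) V x ∈ V :=
  Function.invFunOn_mem (hp.2.imp fun _ h => ⟨h.1, h.2.symm⟩)

lemma invFunOn_eq_of_mem_sweptDomain (hp : (t, x) ∈ sweptDomain I V F) :
    F t (Function.invFunOn (F t) V x) = x :=
  Function.invFunOn_eq (hp.2.imp fun _ h => ⟨h.1, h.2.symm⟩)

lemma exists_eventually_le_norm_sub_of_sphere (hV : IsOpen V) (hF : MemX0W (I ×ˢ V) F) {r : ℝ}
    (hr : 0 < r) (hrV : closedBall x r ⊆ V) (ht : t ∈ I) (hinj : InjOn (F t) V) :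
    ∃ ε > 0, ∀ᶠ s in 𝓝[I] t, ∀ y ∈ sphere x r, ε ≤ ‖F s y - F s x‖ := by
  have hxV : x ∈ V := hrV (mem_closedBall_self hr.le)
  have hlim : ∀ y ∈ V, Tendsto (fun q : ℝ × ℂ => ‖F q.1 q.2 - F q.1 x‖) (𝓝[I] t ×ˢ 𝓝 y)
      (𝓝 ‖F t y - F t x‖) := fun y hy =>
    ((hF.tendsto (.prod hV) ⟨ht, hy⟩).sub
      ((hF.continuousOn_time hxV t ht).tendsto.comp tendsto_fst)).norm
  have hpos : ∀ y ∈ sphere x r, 0 < ‖F t y - F t x‖ := fun y hy =>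
    norm_pos_iff.2 <| sub_ne_zero.2 fun h =>
      (ne_of_mem_sphere hy hr.ne') (hinj (hrV (sphere_subset_closedBall hy)) hxV h)
  have hcont : ContinuousOn (fun y => ‖F t y - F t x‖) (sphere x r) :=
    (((hF.2 t).continuousOn.mono fun y hy =>
      ⟨ht, hrV (sphere_subset_closedBall hy)⟩).sub continuousOn_const).norm
  obtain ⟨ε, hε, hle⟩ := (isCompact_sphere x r).exists_forall_le' hcont hpos
  refine ⟨ε / 2, half_pos hε, ?_⟩
  have hnear := (isCompact_sphere x r).mem_prod_nhdsSet_of_forall fun y hy =>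
    (hlim y (hrV (sphere_subset_closedBall hy))).eventually_const_le
      ((half_lt_self hε).trans_le (hle y hy))
  obtain ⟨A, hA, B, hB, hAB⟩ := mem_prod_iff.1 hnear
  filter_upwards [hA] with s hs y hy
  exact hAB (mk_mem_prod hs (subset_of_mem_nhdsSet hB hy))

lemma eventually_mem_image_closedBall (hV : IsOpen V) (hF : MemX0W (I ×ˢ V) F)
    (hinj : ∀ t ∈ I, InjOn (F t) V) (ht : t ∈ I) {r : ℝ} (hr : 0 < r)
    (hrV : closedBall x r ⊆ V) :
    ∀ᶠ q in 𝓝[I] t ×ˢ 𝓝 (F t x), q.1 ∈ I ∧ q.2 ∈ F q.1 '' closedBall x r := by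
  have hxV : x ∈ V := hrV (mem_closedBall_self hr.le)
  obtain ⟨ε, hε, hsphere⟩ := exists_eventually_le_norm_sub_of_sphere hV hF hr hrV ht (hinj t ht)
  have hdist : Tendsto (fun q : ℝ × ℂ => dist q.2 (F q.1 x)) (𝓝[I] t ×ˢ 𝓝 (F t x)) (𝓝 0) := by
    rw [← dist_self (F t x)]
    exact tendsto_snd.dist ((hF.continuousOn_time hxV t ht).tendsto.comp tendsto_fst)
  filter_upwards [tendsto_fst.eventually hsphere, tendsto_fst.eventually self_mem_nhdsWithin,
    hdist.eventually (gt_mem_nhds (half_pos hε))] with q hq hqI hqx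
  have hdiff : DifferentiableOn ℂ (F q.1) V := (hF.2 q.1).mono fun y hy => ⟨hqI, hy⟩
  have hne : ∃ᶠ y in 𝓝 x, F q.1 y ≠ F q.1 x := by
    refine Frequently.filter_mono (Eventually.frequently ?_) (nhdsWithin_le_nhds (s := {x}ᶜ))
    filter_upwards [mem_nhdsWithin_of_mem_nhds (hV.mem_nhds hxV), self_mem_nhdsWithin]
      with y hyV hyx h using hyx (hinj q.1 hqI hyV hxV h)
  exact ⟨hqI, (hdiff.diffContOnCl_ball hrV).ball_subset_image_closedBall hr hq hne hqx⟩

lemma isRelOpen_sweptDomain (hV : IsOpen V) (hF : MemX0W (I ×ˢ V) F)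
    (hinj : ∀ t ∈ I, InjOn (F t) V) : IsRelOpen I (sweptDomain I V F) where
  fst_mem _ hp := hp.1
  mem_nhds := by
    rintro ⟨t, x'⟩ ⟨ht, x, hx, hx'⟩
    obtain rfl : x' = F t x := hx'
    obtain ⟨r, hr, hrV⟩ := nhds_basis_closedBall.mem_iff.1 (hV.mem_nhds hx)
    filter_upwards [eventually_mem_image_closedBall hV hF hinj ht hr hrV]
    rintro q ⟨hqI, y, hy, hqy⟩
    exact ⟨hqI, y, hrV hy, hqy.symm⟩

lemma continuousOn_invFunOn (hV : IsOpen V) (hF : MemX0W (I ×ˢ V) F)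
    (hinj : ∀ t ∈ I, InjOn (F t) V) :
    ContinuousOn (fun p : ℝ × ℂ => Function.invFunOn (F p.1) V p.2) (sweptDomain I V F) := by
  rintro ⟨t, x'⟩ ⟨ht, x, hx, hx'⟩
  obtain rfl : x' = F t x := hx'
  have hinv : ∀ s ∈ I, LeftInvOn (Function.invFunOn (F s) V) (F s) V := fun s hs =>
    (hinj s hs).leftInvOn_invFunOn
  rw [ContinuousWithinAt, (isRelOpen_sweptDomain hV hF hinj).nhdsWithin_eq
    (mk_mem_sweptDomain ht hx), hinv t ht hx, nhds_basis_closedBall.tendsto_right_iff]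
  intro r hr
  obtain ⟨r₀, hr₀, hr₀V⟩ := nhds_basis_closedBall.mem_iff.1 (hV.mem_nhds hx)
  have hmin : closedBall x (min r r₀) ⊆ V :=
    (closedBall_subset_closedBall (min_le_right r r₀)).trans hr₀V
  filter_upwards [eventually_mem_image_closedBall hV hF hinj ht (lt_min hr hr₀) hmin]
  rintro q ⟨hqI, y, hy, hqy⟩
  rw [← hqy, hinv q.1 hqI (hmin hy)]
  exact closedBall_subset_closedBall (min_le_left r r₀) hy

lemma memX0W_invFunOn (hV : IsOpen V) (hF : MemX0W (I ×ˢ V) F) (hinj : ∀ t ∈ I, InjOn (F t) V)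
    (hderiv : ∀ t ∈ I, ∀ x ∈ V, deriv (F t) x ≠ 0) :
    MemX0W (sweptDomain I V F) fun t => Function.invFunOn (F t) V := by
  have hcont := continuousOn_invFunOn hV hF hinj
  refine ⟨hcont, fun t x hp => ?_⟩
  have hslice : {y : ℂ | (t, y) ∈ sweptDomain I V F} ∈ 𝓝 x :=
    ((isRelOpen_sweptDomain hV hF hinj).isOpen_slice t).mem_nhds hp
  have hcont_t : ContinuousAt (Function.invFunOn (F t) V) x :=
    ContinuousOn.continuousAt (hcont.comp (f := fun y : ℂ => (t, y)) (by fun_prop)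
      fun _ hy => hy) hslice
  have hmem := invFunOn_mem_of_mem_sweptDomain hp
  exact (HasDerivAt.of_local_left_inverse hcont_t
    (hF.differentiableAt (.prod hV) (mk_mem_prod hp.1 hmem)).hasDerivAt (hderiv t hp.1 _ hmem)
    (mem_of_superset hslice fun _ => invFunOn_eq_of_mem_sweptDomain)
    ).differentiableAt.differentiableWithinAt

end SweptDomain

section HolomorphicFlow

/-- `F t x` is the position at time `t ∈ I` of the characteristic of `x' = β(t, x)` that passes
through `x ∈ V` at time `T` and stays in the phase space `U`, for a field `β ∈ X₀(I × U)`.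
Continuity of `F` and its holomorphy in `x` are consequences. -/
structure IsHolomorphicFlow (I : Set ℝ) (T : ℝ) (U V : Set ℂ) (β F : ℝ → ℂ → ℂ) : Prop where
  base_mem : T ∈ I
  isOpen_phase : IsOpen U
  isOpen_initial : IsOpen V
  memX0W_field : MemX0W (I ×ˢ U) β
  apply_base : ∀ x ∈ V, F T x = x
  mem_phase : ∀ t ∈ I, ∀ x ∈ V, F t x ∈ U
  hasDerivWithinAt : ∀ t ∈ I, ∀ x ∈ V, HasDerivWithinAt (fun s => F s x) (β t (F t x)) I t

namespace IsHolomorphicFlow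

variable {I : Set ℝ} {T t : ℝ} {U V : Set ℂ} {β F : ℝ → ℂ → ℂ} {x : ℂ}

lemma continuousOn_time (h : IsHolomorphicFlow I T U V β F) (hx : x ∈ V) :
    ContinuousOn (fun s => F s x) I := fun s hs =>
  (h.hasDerivWithinAt s hs x hx).continuousWithinAt

lemma continuousOn_comp {f : ℝ → ℂ → ℂ} (h : IsHolomorphicFlow I T U V β F)
    (hf : MemX0W (I ×ˢ U) f) (hx : x ∈ V) : ContinuousOn (fun s => f s (F s x)) I :=
  hf.continuousOn_comp_curve (h.continuousOn_time hx) fun s hs => ⟨hs, h.mem_phase s hs x hx⟩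

variable [OrdConnected I]

lemma exists_norm_sub_le_of_norm_sub_lt (h : IsHolomorphicFlow I T U V β F) {a b : ℝ} (ha : a ∈ I)
    (hb : b ∈ I) (hx : x ∈ V) :
    ∃ ρ > 0, ∃ L : NNReal, ∀ y ∈ V, ∀ τ ∈ Icc a b,
      ‖F τ y - F τ x‖ * Real.exp ((L + 1) * (b - a)) < ρ → ∀ s ∈ Icc a b,
        ‖F s y - F s x‖ ≤ ‖F τ y - F τ x‖ * Real.exp ((L + 1) * (b - a)) ∧
          ‖β s (F s y) - β s (F s x)‖ ≤ L * ‖F s y - F s x‖ := by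
  have hsub : Icc a b ⊆ I := OrdConnected.out ‹_› ha hb
  obtain ⟨ρ, hρ, L, hL⟩ := h.memX0W_field.exists_lipschitzOnWith_tube h.isOpen_phase
    isCompact_Icc hsub ((h.continuousOn_time hx).mono hsub)
    fun s hs => h.mem_phase s (hsub hs) x hx
  refine ⟨ρ, hρ, L, fun y hy τ hτ hclose s hs => ?_⟩
  have hle := norm_sub_le_of_lipschitzOnWith_tube (fun r hr => (hL r hr).2)
    (fun r hr => (h.hasDerivWithinAt r (hsub hr) x hx).mono hsub)
    (fun r hr => (h.hasDerivWithinAt r (hsub hr) y hy).mono hsub) hτ hclose hs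
  exact ⟨hle, (hL s hs).2.norm_sub_le (mem_closedBall_iff_norm.2 (hle.trans hclose.le))
    (mem_closedBall_self hρ.le)⟩

lemma injOn (h : IsHolomorphicFlow I T U V β F) (ht : t ∈ I) : InjOn (F t) V := by
  intro x hx y hy hxy
  obtain ⟨a, ha, b, hb, hTab, hab⟩ := exists_Icc_mem_nhdsWithin ht h.base_mem
  obtain ⟨ρ, hρ, L, hρL⟩ := h.exists_norm_sub_le_of_norm_sub_lt ha hb hx
  have hzero : ‖F t y - F t x‖ = 0 := by rw [hxy, sub_self, norm_zero]
  have hle := (hρL y hy t (mem_of_mem_nhdsWithin ht hab) (by rwa [hzero, zero_mul]) T hTab).1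
  rw [hzero, zero_mul, h.apply_base x hx, h.apply_base y hy, norm_le_zero_iff,
    sub_eq_zero] at hle
  exact hle.symm

lemma exists_eventually_norm_sub_le (h : IsHolomorphicFlow I T U V β F) {a b : ℝ} (ha : a ∈ I)
    (hb : b ∈ I) (hT : T ∈ Icc a b) (hx : x ∈ V) :
    ∃ C L : ℝ, ∀ᶠ y in 𝓝 x, ∀ s ∈ Icc a b, ‖F s y - F s x‖ ≤ C * ‖y - x‖ ∧
      ‖β s (F s y) - β s (F s x)‖ ≤ L * ‖F s y - F s x‖ := by
  obtain ⟨ρ, hρ, L, hρL⟩ := h.exists_norm_sub_le_of_norm_sub_lt ha hb hx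
  have hclose : ∀ᶠ y in 𝓝 x, ‖y - x‖ * Real.exp ((L + 1) * (b - a)) < ρ :=
    ContinuousAt.eventually_lt (by fun_prop) continuousAt_const (by simpa using hρ)
  refine ⟨Real.exp ((L + 1) * (b - a)), L, ?_⟩
  filter_upwards [hclose, h.isOpen_initial.mem_nhds hx] with y hyρ hy
  have hyT := hρL y hy T hT
  simp only [h.apply_base y hy, h.apply_base x hx, mul_comm ‖y - x‖] at hyT hyρ
  exact hyT hyρ

lemma continuousOn (h : IsHolomorphicFlow I T U V β F) :
    ContinuousOn (fun p : ℝ × ℂ => F p.1 p.2) (I ×ˢ V) :=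
  continuousOn_prod_of_dist_le (f := F) h.base_mem (fun _ hx => h.continuousOn_time hx)
    fun x hx a ha b hb hT => by
      obtain ⟨C, L, hCL⟩ := h.exists_eventually_norm_sub_le ha hb hT hx
      refine ⟨C, hCL.mono fun y hy s hs => ?_⟩
      rw [dist_eq_norm, dist_eq_norm]
      exact (hy s hs).1

lemma continuousOn_slope (h : IsHolomorphicFlow I T U V β F) (hx : x ∈ V) {y : ℂ} (hy : y ∈ V)
    (hyx : y ≠ x) : ContinuousOn (fun s => slope (β s) (F s x) (F s y)) I := by
  simp only [slope_def_field]
  exact ((h.continuousOn_comp h.memX0W_field hy).sub (h.continuousOn_comp h.memX0W_field hx)).div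
    ((h.continuousOn_time hy).sub (h.continuousOn_time hx))
    fun s hs => sub_ne_zero.2 ((h.injOn hs).ne hy hx hyx)

lemma slope_eq_exp (h : IsHolomorphicFlow I T U V β F) (ht : t ∈ I) (hx : x ∈ V) {y : ℂ}
    (hy : y ∈ V) (hyx : y ≠ x) :
    slope (F t) x y = exp (-∫ s in t..T, slope (β s) (F s x) (F s y)) := by
  have hlin : ∀ s ∈ I, HasDerivWithinAt (fun s => F s y - F s x)
      (slope (β s) (F s x) (F s y) * (F s y - F s x) + 0) I s := fun s hs => by
    rw [add_zero, slope_def_field, div_mul_cancel₀ _ (sub_ne_zero.2 ((h.injOn hs).ne hy hx hyx))]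
    exact (h.hasDerivWithinAt s hs y hy).fun_sub (h.hasDerivWithinAt s hs x hx)
  have hsol := eq_duhamel (h.continuousOn_slope hx hy hyx) continuousOn_const ht h.base_mem hlin
  simp only [duhamel, mul_zero, intervalIntegral.integral_zero, sub_zero, h.apply_base x hx,
    h.apply_base y hy] at hsol
  rw [slope_def_field, hsol, mul_div_cancel_left₀ _ (sub_ne_zero.2 hyx)]

lemma tendsto_slope_field (h : IsHolomorphicFlow I T U V β F) (ht : t ∈ I) (hx : x ∈ V) :
    Tendsto (fun y => slope (β t) (F t x) (F t y)) (𝓝[≠] x) (𝓝 (deriv (β t) (F t x))) := by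
  have hV : V ∈ 𝓝[≠] x := mem_nhdsWithin_of_mem_nhds (h.isOpen_initial.mem_nhds hx)
  have hcont : Tendsto (F t) (𝓝[≠] x) (𝓝 (F t x)) :=
    ((h.continuousOn.comp (f := fun y : ℂ => (t, y)) (by fun_prop) fun y hy =>
      mk_mem_prod ht hy).continuousAt (h.isOpen_initial.mem_nhds hx)).tendsto.mono_left
        nhdsWithin_le_nhds
  refine (h.memX0W_field.differentiableAt (.prod h.isOpen_phase)
    (mk_mem_prod ht (h.mem_phase t ht x hx))).hasDerivAt.tendsto_slope.comp
      (tendsto_nhdsWithin_iff.2 ⟨hcont, ?_⟩)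
  filter_upwards [hV, self_mem_nhdsWithin] with y hy hyx using (h.injOn ht).ne hy hx hyx

lemma tendsto_integral_slope (h : IsHolomorphicFlow I T U V β F) (ht : t ∈ I) (hx : x ∈ V) :
    Tendsto (fun y => ∫ s in t..T, slope (β s) (F s x) (F s y)) (𝓝[≠] x)
      (𝓝 (∫ s in t..T, deriv (β s) (F s x))) := by
  have hV : V ∈ 𝓝[≠] x := mem_nhdsWithin_of_mem_nhds (h.isOpen_initial.mem_nhds hx)
  have hsub : uIcc t T ⊆ I := OrdConnected.uIcc_subset ‹_› ht h.base_mem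
  obtain ⟨a, ha, b, hb, hTab, hab⟩ := exists_Icc_mem_nhdsWithin ht h.base_mem
  have htab : uIcc t T ⊆ Icc a b := uIcc_subset_Icc (mem_of_mem_nhdsWithin ht hab) hTab
  obtain ⟨_, L, hL⟩ := h.exists_eventually_norm_sub_le ha hb hTab hx
  refine intervalIntegral.tendsto_integral_filter_of_dominated_convergence (fun _ => L) ?_ ?_
    (by simp) (.of_forall fun s hs => h.tendsto_slope_field (hsub (uIoc_subset_uIcc hs)) hx)
  · filter_upwards [hV, self_mem_nhdsWithin] with y hy hyx
    exact ((h.continuousOn_slope hx hy hyx).mono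
      (uIoc_subset_uIcc.trans hsub)).aestronglyMeasurable measurableSet_uIoc
  · filter_upwards [hV, self_mem_nhdsWithin, mem_nhdsWithin_of_mem_nhds hL] with y hy hyx hyL
    refine .of_forall fun s hs => ?_
    have hne := (h.injOn (hsub (uIoc_subset_uIcc hs))).ne hy hx hyx
    rw [slope_def_field, norm_div, div_le_iff₀ (norm_pos_iff.2 (sub_ne_zero.2 hne))]
    exact (hyL s (htab (uIoc_subset_uIcc hs))).2

lemma hasDerivAt (h : IsHolomorphicFlow I T U V β F) (ht : t ∈ I) (hx : x ∈ V) :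
    HasDerivAt (F t) (exp (-∫ s in t..T, deriv (β s) (F s x))) x := by
  rw [hasDerivAt_iff_tendsto_slope]
  refine ((Complex.continuous_exp.tendsto _).comp (h.tendsto_integral_slope ht hx).neg).congr' ?_
  filter_upwards [mem_nhdsWithin_of_mem_nhds (h.isOpen_initial.mem_nhds hx),
    self_mem_nhdsWithin] with y hy hyx
  exact (h.slope_eq_exp ht hx hy hyx).symm

lemma memX0W (h : IsHolomorphicFlow I T U V β F) : MemX0W (I ×ˢ V) F :=
  ⟨h.continuousOn, fun _ _ hp =>
    (h.hasDerivAt hp.1 hp.2).differentiableAt.differentiableWithinAt⟩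

lemma deriv_ne_zero (h : IsHolomorphicFlow I T U V β F) (ht : t ∈ I) (hx : x ∈ V) :
    deriv (F t) x ≠ 0 := by
  rw [(h.hasDerivAt ht hx).deriv]
  exact Complex.exp_ne_zero _

end IsHolomorphicFlow

end HolomorphicFlow

section TransportEquation

variable {I : Set ℝ} {T t : ℝ} {U V : Set ℂ} {lam b F g w : ℝ → ℂ → ℂ} {ψ : ℂ → ℂ} {x : ℂ}

lemma SolvesLW.memX1W {D : Set (ℝ × ℂ)} (hD : IsRelOpen I D) (hlam : MemX0W D lam)
    (hb : MemX0W D b) (hg : MemX0W D g) (hw : MemX0W D w) (hsol : SolvesLW D lam b g w) :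
    MemX1W D w :=
  ⟨hw, _, ((hlam.mul hw).add (hb.mul (hw.deriv hD))).add hg, hsol⟩

/-- The solution of the Cauchy problem for `t ∂w/∂t = lam w + b ∂w/∂x + g` with datum `ψ` at time
`T`, given by Duhamel's formula along the characteristic `s ↦ F s x₀` through `(t, x)`; the initial
point is `x₀ = F t ⁻¹ x`. Off the swept domain of `F` the value is junk. -/
def transportSolution (T : ℝ) (V : Set ℂ) (F lam g : ℝ → ℂ → ℂ) (ψ : ℂ → ℂ) (t : ℝ) (x : ℂ) : ℂ :=
  let x₀ := Function.invFunOn (F t) V x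
  duhamel T (ψ x₀) (fun s => lam s (F s x₀) / (s : ℂ)) (fun s => g s (F s x₀) / (s : ℂ)) t

namespace IsHolomorphicFlow

variable [OrdConnected I]

lemma isRelOpen_sweptDomain {β : ℝ → ℂ → ℂ} (h : IsHolomorphicFlow I T U V β F) :
    IsRelOpen I (sweptDomain I V F) :=
  _root_.isRelOpen_sweptDomain h.isOpen_initial h.memX0W fun _ => h.injOn

lemma memX0W_div_time_comp {β f : ℝ → ℂ → ℂ} (h : IsHolomorphicFlow I T U V β F) (hI : I ⊆ Ioi 0)
    (hf : MemX0W (sweptDomain I V F) f) : MemX0W (I ×ˢ V) fun t x => f t (F t x) / (t : ℂ) :=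
  (hf.comp h.memX0W fun _ hp => mk_mem_sweptDomain hp.1 hp.2).div_time fun _ hp =>
    (hI hp.1).ne'

lemma solvesLW_sweptDomain_iff
    (h : IsHolomorphicFlow I T U V (fun t x => -(b t x) / (t : ℂ)) F) (hI : I ⊆ Ioi 0)
    (hw : MemX0W (sweptDomain I V F) w) :
    SolvesLW (sweptDomain I V F) lam b g w ↔ ∀ t ∈ I, ∀ x ∈ V,
      HasDerivWithinAt (fun s => w s (F s x))
        (lam t (F t x) / (t : ℂ) * w t (F t x) + g t (F t x) / (t : ℂ)) I t := by
  have hD := h.isRelOpen_sweptDomain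
  have hiff : ∀ t ∈ I, ∀ x ∈ V, HasDerivWithinAt (fun s => w s (F s x))
      (lam t (F t x) / (t : ℂ) * w t (F t x) + g t (F t x) / (t : ℂ)) I t ↔
      HasDerivWithinAt (fun s => w s (F t x)) ((lam t (F t x) * w t (F t x) +
        b t (F t x) * deriv (w t) (F t x) + g t (F t x)) / (t : ℂ))
        {s | (s, F t x) ∈ sweptDomain I V F} t := fun t ht x hx => by
    have hp := mk_mem_sweptDomain (F := F) ht hx
    rw [HasDerivWithinAt, HasDerivWithinAt, hD.nhdsWithin_timeSlice hp, ← HasDerivWithinAt,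
      ← HasDerivWithinAt, ← hw.hasDerivWithinAt_comp_curve_iff hD hp (h.hasDerivWithinAt t ht x hx)]
    exact iff_of_eq (congrArg (HasDerivWithinAt _ · I t) (by ring))
  constructor
  · exact fun hsol t ht x hx =>
      (hiff t ht x hx).2 (hsol t _ (mk_mem_sweptDomain ht hx) (hI ht))
  · rintro hchar t x ⟨ht, y, hy, hxy⟩ -
    obtain rfl : x = F t y := hxy
    exact (hiff t ht y hy).1 (hchar t ht y hy)

lemma transportSolution_apply {β : ℝ → ℂ → ℂ} (h : IsHolomorphicFlow I T U V β F) (ht : t ∈ I)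
    (hx : x ∈ V) : transportSolution T V F lam g ψ t (F t x) =
      duhamel T (ψ x) (fun s => lam s (F s x) / (s : ℂ)) (fun s => g s (F s x) / (s : ℂ)) t := by
  rw [transportSolution, (h.injOn ht).leftInvOn_invFunOn hx]

lemma memX0W_transportSolution {β : ℝ → ℂ → ℂ} (h : IsHolomorphicFlow I T U V β F)
    (hI : I ⊆ Ioi 0) (hlam : MemX0W (sweptDomain I V F) lam) (hg : MemX0W (sweptDomain I V F) g)
    (hψ : DifferentiableOn ℂ ψ V) :
    MemX0W (sweptDomain I V F) (transportSolution T V F lam g ψ) :=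
  (MemX0W.duhamel h.isOpen_initial h.base_mem hψ (h.memX0W_div_time_comp hI hlam)
    (h.memX0W_div_time_comp hI hg)).comp
    (memX0W_invFunOn h.isOpen_initial h.memX0W (fun _ => h.injOn) fun _ ht _ => h.deriv_ne_zero ht)
    fun _ hp => ⟨hp.1, invFunOn_mem_of_mem_sweptDomain hp⟩

lemma solvesLW_transportSolution
    (h : IsHolomorphicFlow I T U V (fun t x => -(b t x) / (t : ℂ)) F) (hI : I ⊆ Ioi 0)
    (hlam : MemX0W (sweptDomain I V F) lam) (hg : MemX0W (sweptDomain I V F) g)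
    (hψ : DifferentiableOn ℂ ψ V) :
    SolvesLW (sweptDomain I V F) lam b g (transportSolution T V F lam g ψ) := by
  rw [h.solvesLW_sweptDomain_iff hI (h.memX0W_transportSolution hI hlam hg hψ)]
  intro t ht x hx
  rw [h.transportSolution_apply ht hx]
  exact (hasDerivWithinAt_duhamel ((h.memX0W_div_time_comp hI hlam).continuousOn_time hx)
    ((h.memX0W_div_time_comp hI hg).continuousOn_time hx) ht h.base_mem).congr_of_mem
      (fun s hs => h.transportSolution_apply hs hx) ht

lemma eqOn_transportSolution
    (h : IsHolomorphicFlow I T U V (fun t x => -(b t x) / (t : ℂ)) F) (hI : I ⊆ Ioi 0)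
    (hlam : MemX0W (sweptDomain I V F) lam) (hg : MemX0W (sweptDomain I V F) g)
    (hw : MemX0W (sweptDomain I V F) w) (hsol : SolvesLW (sweptDomain I V F) lam b g w)
    (hwT : ∀ x ∈ V, w T x = ψ x) :
    ∀ p ∈ sweptDomain I V F, w p.1 p.2 = transportSolution T V F lam g ψ p.1 p.2 := by
  rintro ⟨t, x⟩ ⟨ht, y, hy, hxy⟩
  obtain rfl : x = F t y := hxy
  have hchar := (h.solvesLW_sweptDomain_iff hI hw).1 hsol
  have heq := eq_duhamel ((h.memX0W_div_time_comp hI hlam).continuousOn_time hy)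
    ((h.memX0W_div_time_comp hI hg).continuousOn_time hy) ht h.base_mem
    fun s hs => hchar s hs y hy
  rw [h.apply_base y hy, hwT y hy] at heq
  exact heq.trans (h.transportSolution_apply ht hy).symm

end IsHolomorphicFlow

theorem statement5_general [OrdConnected I] (hI : I ⊆ Ioi 0) (hT : T ∈ I) (hU : IsOpen U)
    (hV : IsOpen V) (hb : MemX0W (I ×ˢ U) b)
    (hF_base : ∀ x ∈ V, F T x = x)
    (hF : ∀ t ∈ I, ∀ x ∈ V, F t x ∈ U ∧
      HasDerivWithinAt (fun s => F s x) (-(b t (F t x)) / (t : ℂ)) I t)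
    (hlam : MemX0W (sweptDomain I V F) lam) (hg : MemX0W (sweptDomain I V F) g)
    (hψ : DifferentiableOn ℂ ψ V) :
    ∃ w : ℝ → ℂ → ℂ, MemX1W (sweptDomain I V F) w ∧ SolvesLW (sweptDomain I V F) lam b g w ∧
      (∀ x ∈ V, w T x = ψ x) ∧
      (∀ x ∈ V, ∀ t ∈ I, w t (F t x) =
        ψ x * exp (-(∫ s in t..T, lam s (F s x) / (s : ℂ))) - ∫ τ in t..T,
          exp (-(∫ s in t..τ, lam s (F s x) / (s : ℂ))) * (g τ (F τ x) / (τ : ℂ))) ∧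
      ∀ w' : ℝ → ℂ → ℂ, MemX0W (sweptDomain I V F) w' → SolvesLW (sweptDomain I V F) lam b g w' →
        (∀ x ∈ V, w' T x = ψ x) → ∀ p ∈ sweptDomain I V F, w' p.1 p.2 = w p.1 p.2 := by
  have h : IsHolomorphicFlow I T U V (fun t x => -(b t x) / (t : ℂ)) F :=
    { base_mem := hT
      isOpen_phase := hU
      isOpen_initial := hV
      memX0W_field := hb.neg.div_time fun _ hp => (hI hp.1).ne'
      apply_base := hF_base
      mem_phase := fun t ht x hx => (hF t ht x hx).1
      hasDerivWithinAt := fun t ht x hx => (hF t ht x hx).2 }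
  have hbD := hb.mono (sweptDomain_subset_prod h.mem_phase)
  have hw := h.memX0W_transportSolution hI hlam hg hψ
  have hsol := h.solvesLW_transportSolution hI hlam hg hψ
  refine ⟨transportSolution T V F lam g ψ, hsol.memX1W h.isRelOpen_sweptDomain hlam hbD hg hw, hsol,
    fun x hx => ?_, fun x hx t ht => h.transportSolution_apply ht hx,
    fun w' hw' hsol' hT' => h.eqOn_transportSolution hI hlam hg hw' hsol' hT'⟩
  simpa only [h.apply_base x hx, duhamel_self] using
    h.transportSolution_apply (lam := lam) (g := g) (ψ := ψ) hT hx

end TransportEquation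

/-- Proposition 4.2: on the characteristic domain `𝒟`, for every `g ∈ X₀(𝒟)` and every
`ψ` holomorphic on `D_{R₁}`, the Cauchy problem `t ∂w/∂t - λ w - b ∂w/∂x = g`,
`w(T,·) = ψ`, has a unique solution `w ∈ X₁(𝒟)`, given by the explicit
characteristic formula (4.3). -/
theorem statement5
    (T₀ R₀ : ℝ) (hT₀ : 0 < T₀) (hR₀ : 0 < R₀)
    (m : ℝ → ℝ) (hm : IsWeight T₀ m)
    (lam b : ℝ → ℂ → ℂ)
    (hlamX : MemX0 (Set.Icc 0 T₀) R₀ lam) (hbX : MemX0 (Set.Icc 0 T₀) R₀ b)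
    (B : ℝ) (hB : 0 < B)
    (hb : ∀ t ∈ Set.Ioc (0:ℝ) T₀, ∀ x ∈ Metric.ball (0:ℂ) R₀, ‖b t x‖ ≤ B * m t)
    (T R R₁ : ℝ) (hT : 0 < T) (hTT₀ : T < T₀)
    (hR : 0 < R) (hRR₁ : R < R₁) (hR₁R₀ : R₁ < R₀)
    (hgap1 : R + B * wphi m T < R₁) (hgap2 : R₁ + B * wphi m T < R₀)
    -- `Φ t t₀ x₀` is the characteristic `φ(t; t₀, x₀)`, the unique solution of
    -- `dx/dt = -b(t,x)/t`, `x(t₀) = x₀` :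
    (Φ : ℝ → ℝ → ℂ → ℂ)
    (hΦinit : ∀ t₀ ∈ Set.Ioc (0:ℝ) T, ∀ x₀ ∈ Metric.ball (0:ℂ) R₁, Φ t₀ t₀ x₀ = x₀)
    (hΦode : ∀ t₀ ∈ Set.Ioc (0:ℝ) T, ∀ x₀ ∈ Metric.ball (0:ℂ) R₁, ∀ t ∈ Set.Ioc (0:ℝ) T,
      Φ t t₀ x₀ ∈ Metric.ball (0:ℂ) R₀ ∧
      HasDerivAt (fun s => Φ s t₀ x₀) (-(b t (Φ t t₀ x₀)) / (t:ℂ)) t)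
    (hΦuniq : ∀ t₀ ∈ Set.Ioc (0:ℝ) T, ∀ x₀ ∈ Metric.ball (0:ℂ) R₁, ∀ y : ℝ → ℂ,
      y t₀ = x₀ →
      (∀ t ∈ Set.Ioc (0:ℝ) T, y t ∈ Metric.ball (0:ℂ) R₀ ∧
        HasDerivAt y (-(b t (y t)) / (t:ℂ)) t) →
      ∀ t ∈ Set.Ioc (0:ℝ) T, y t = Φ t t₀ x₀)
    (g : ℝ → ℂ → ℂ) (hg : MemX0W (Dchar T R₁ Φ) g)
    (ψ : ℂ → ℂ) (hψ : DifferentiableOn ℂ ψ (Metric.ball (0:ℂ) R₁)) :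
    ∃ w : ℝ → ℂ → ℂ,
      MemX1W (Dchar T R₁ Φ) w ∧
      SolvesLW (Dchar T R₁ Φ) lam b g w ∧
      (∀ x₀ ∈ Metric.ball (0:ℂ) R₁, w T x₀ = ψ x₀) ∧
      -- the explicit formula (4.3), written along the characteristic through `(T, x₀)` :
      (∀ x₀ ∈ Metric.ball (0:ℂ) R₁, ∀ t ∈ Set.Ioc (0:ℝ) T,
        w t (Φ t T x₀) =
          ψ x₀ * Complex.exp (-(∫ s in t..T, lam s (Φ s T x₀) / (s:ℂ)))
            - ∫ τ in t..T,
                Complex.exp (-(∫ s in t..τ, lam s (Φ s T x₀) / (s:ℂ)))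
                  * (g τ (Φ τ T x₀) / (τ:ℂ))) ∧
      -- uniqueness :
      (∀ w' : ℝ → ℂ → ℂ, MemX1W (Dchar T R₁ Φ) w' → SolvesLW (Dchar T R₁ Φ) lam b g w' →
        (∀ x₀ ∈ Metric.ball (0:ℂ) R₁, w' T x₀ = ψ x₀) →
        ∀ p ∈ Dchar T R₁ Φ, w' p.1 p.2 = w p.1 p.2) := by
  have hsub : Ioc 0 T ×ˢ ball (0 : ℂ) R₀ ⊆ Icc 0 T₀ ×ˢ ball 0 R₀ :=
    prod_mono_left (Ioc_subset_Icc_self.trans (Icc_subset_Icc_right hTT₀.le))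
  have hTI : T ∈ Ioc 0 T := right_mem_Ioc.2 hT
  have hDchar : Dchar T R₁ Φ ⊆ Icc 0 T₀ ×ˢ ball 0 R₀ :=
    (sweptDomain_subset_prod fun t ht x hx => (hΦode T hTI x hx t ht).1).trans hsub
  obtain ⟨w, hw, hsol, hwT, hformula, huniq⟩ := statement5_general (F := fun t x => Φ t T x)
    Ioc_subset_Ioi_self hTI isOpen_ball isOpen_ball ((MemX0W.of_memX0 hbX).mono hsub)
    (hΦinit T hTI) (fun t ht x hx => (hΦode T hTI x hx t ht).imp_right (·.hasDerivWithinAt))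
    ((MemX0W.of_memX0 hlamX).mono hDchar) hg hψ
  exact ⟨w, hw, hsol, hwT, hformula, fun w' hw' => huniq w' hw'.1⟩
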